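/- Let s ≥ 2. The extended code of C_{(2,n,3,1)}, where n = 2^{2s}+2^s+1, has length n+1, dimension n − 3s, and minimum distance exactly 4, and it is distance-optimal with respect to the sphere packing bound: every binary linear code of length n+1 and dimension n − 3s has minimum distance at most 4. -/

import Mathlib

open Finset

/-- The binary cyclic (BCH-type) code of length `n` over GF(2), consisting of all
words `c` such that `∑ i, c i • β ^ (j * i) = 0` for every `j` in the check set `J`. -/
def BCHCode {F : Type} [Field F] [Algebra (ZMod 2) F] (n : ℕ) (β : F) (J : Finset ℕ) :
    Submodule (ZMod 2) (Fin n → ZMod 2) where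
  carrier := {c | ∀ j ∈ J, ∑ i : Fin n, c i • β ^ (j * (i : ℕ)) = 0}
  add_mem' := by
    intro a b ha hb j hj
    simp only [Set.mem_setOf_eq, Pi.add_apply, add_smul, Finset.sum_add_distrib] at *
    rw [ha j hj, hb j hj, add_zero]
  zero_mem' := by
    intro j hj
    simp
  smul_mem' := by
    intro r c hc j hj
    simp only [Set.mem_setOf_eq, Pi.smul_apply, smul_assoc, ← Finset.smul_sum] at *
    rw [hc j hj, smul_zero]

/-- The (Euclidean) dual of a binary linear code. -/
def dualCode {N : ℕ} (C : Submodule (ZMod 2) (Fin N → ZMod 2)) :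
    Submodule (ZMod 2) (Fin N → ZMod 2) where
  carrier := {b | ∀ c ∈ C, ∑ i, b i * c i = 0}
  add_mem' := by
    intro a b ha hb c hc
    simp only [Set.mem_setOf_eq, Pi.add_apply, add_mul, Finset.sum_add_distrib] at *
    rw [ha c hc, hb c hc, add_zero]
  zero_mem' := by
    intro c hc
    simp
  smul_mem' := by
    intro r b hb c hc
    simp only [Set.mem_setOf_eq, Pi.smul_apply, smul_eq_mul, mul_assoc, ← Finset.mul_sum] at *
    rw [hb c hc, mul_zero]

/-- The linear map appending an overall parity-check coordinate. -/
def extendMap (N : ℕ) : (Fin N → ZMod 2) →ₗ[ZMod 2] (Fin (N + 1) → ZMod 2) where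
  toFun c := fun j => if h : (j : ℕ) < N then c ⟨j, h⟩ else ∑ i, c i
  map_add' a b := by
    funext j
    by_cases h : (j : ℕ) < N <;> simp [h, Finset.sum_add_distrib]
  map_smul' r c := by
    funext j
    by_cases h : (j : ℕ) < N <;> simp [h, Finset.mul_sum]

/-- The extended code of a binary linear code. -/
def extendedCode {N : ℕ} (C : Submodule (ZMod 2) (Fin N → ZMod 2)) :
    Submodule (ZMod 2) (Fin (N + 1) → ZMod 2) :=
  C.map (extendMap N)

/-- The minimum distance (= minimum nonzero Hamming weight) of a binary linear code. -/
noncomputable def minDist {N : ℕ} (C : Submodule (ZMod 2) (Fin N → ZMod 2)) : ℕ :=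
  sInf {w | ∃ c ∈ C, c ≠ 0 ∧ hammingNorm c = w}

/-- The number of codewords of Hamming weight `w` in a binary linear code. -/
noncomputable def weightCount {N : ℕ} (C : Submodule (ZMod 2) (Fin N → ZMod 2)) (w : ℕ) : ℕ :=
  Set.ncard {c : Fin N → ZMod 2 | c ∈ C ∧ hammingNorm c = w}

/-- The 2-cyclotomic coset of `i` modulo `n`. -/
def cycCoset (n i : ℕ) : Set ℕ := {x | ∃ j : ℕ, x = i * 2 ^ j % n}

/-- The coset leader (smallest element) of the 2-cyclotomic coset of `i` modulo `n`. -/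
noncomputable def cosetLeader (n i : ℕ) : ℕ := sInf (cycCoset n i)

/-!
Write `q = 2 ^ s`. Since `n = q ^ 2 + q + 1` divides `q ^ 3 - 1` and exceeds `q ^ 2`, the order of
`2` modulo `n` divides `3 * s` and exceeds `2 * s`, so it is `3 * s`. This is the degree of the
minimal polynomial of the primitive `n`-th root of unity `β`, i.e. the redundancy of the code. The
columns `β ^ i` of the parity-check matrix are nonzero and pairwise distinct, so nonzero codewords
have weight at least `3`, and at least `4` after a parity bit is appended. A code of length
`n + 1` and dimension `n - 3 * s` with minimum distance at least `5` would violate the sphere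
packing bound for radius `2`, because `2 * q ^ 3 < 1 + (n + 1) + (n + 1) * n / 2`.
-/

section HammingWeight

variable {ι : Type*} [Fintype ι]

theorem natCast_hammingNorm (c : ι → ZMod 2) : (hammingNorm c : ZMod 2) = ∑ i, c i := by
  rw [hammingNorm, card_filter, Nat.cast_sum]
  refine sum_congr rfl fun i _ => ?_
  generalize c i = z
  decide +revert

theorem card_filter_hammingNorm_eq [DecidableEq ι] (w : ℕ) :
    #{c : ι → ZMod 2 | hammingNorm c = w} = (Fintype.card ι).choose w := by
  rw [← card_univ, ← card_powersetCard]
  refine card_nbij' (fun c => ({i | c i ≠ 0} : Finset ι)) (fun S i => if i ∈ S then 1 else 0)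
    ?_ ?_ ?_ ?_
  · intro c hc
    simpa [hammingNorm] using hc
  · intro S hS
    simpa [hammingNorm] using hS
  · intro c _
    funext i
    simp only [mem_filter_univ]
    generalize c i = z
    decide +revert
  · intro S _
    simp

theorem card_filter_hammingNorm_le [DecidableEq ι] (t : ℕ) :
    #{c : ι → ZMod 2 | hammingNorm c ≤ t} = ∑ w ∈ range (t + 1), (Fintype.card ι).choose w := by
  rw [card_eq_sum_card_fiberwise (f := hammingNorm) (t := range (t + 1))
    (fun c hc => by simpa [Nat.lt_succ_iff] using hc)]
  refine sum_congr rfl fun w hw => ?_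
  rw [← card_filter_hammingNorm_eq, filter_filter]
  congr 1
  ext c
  simp only [mem_filter_univ, and_iff_right_iff_imp]
  rintro rfl
  exact Nat.lt_succ_iff.1 (mem_range.1 hw)

theorem three_le_hammingNorm_of_sum_smul_eq_zero {V : Type*} [AddCommGroup V] [Module (ZMod 2) V]
    {v : ι → V} (hinj : Function.Injective v) (hv : ∀ i, v i ≠ 0) {c : ι → ZMod 2} (hc : c ≠ 0)
    (hsum : ∑ i, c i • v i = 0) : 3 ≤ hammingNorm c := by
  classical
  have hsupp : ∑ i with c i ≠ 0, v i = 0 := by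
    have hterm (i : ι) : (if c i ≠ 0 then v i else 0) = c i • v i := by
      obtain h | h : c i = 0 ∨ c i = 1 := by
        generalize c i = z
        decide +revert
      all_goals simp [h]
    simp only [sum_filter, hterm, hsum]
  by_contra! hlt
  have hpos : 0 < hammingNorm c := hammingNorm_pos_iff.2 hc
  obtain h1 | h2 : hammingNorm c = 1 ∨ hammingNorm c = 2 := by omega
  · obtain ⟨i, hi⟩ := card_eq_one.1 h1
    rw [hi, sum_singleton] at hsupp
    exact hv i hsupp
  · obtain ⟨i, j, hij, hS⟩ := card_eq_two.1 h2
    rw [hS, sum_pair hij, ← ZModModule.sub_eq_add, sub_eq_zero] at hsupp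
    exact hij (hinj hsupp)

end HammingWeight

section MinDist

variable {N : ℕ} {C : Submodule (ZMod 2) (Fin N → ZMod 2)}

theorem minDist_le_hammingNorm {c : Fin N → ZMod 2} (hc : c ∈ C) (hc0 : c ≠ 0) :
    minDist C ≤ hammingNorm c :=
  Nat.sInf_le ⟨c, hc, hc0, rfl⟩

theorem le_minDist {d : ℕ} (hC : C ≠ ⊥) (h : ∀ c ∈ C, c ≠ 0 → d ≤ hammingNorm c) :
    d ≤ minDist C := by
  obtain ⟨c, hc, hc0⟩ := C.ne_bot_iff.1 hC
  refine le_csInf ⟨_, c, hc, hc0, rfl⟩ ?_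
  rintro _ ⟨x, hx, hx0, rfl⟩
  exact h x hx hx0

theorem sphere_packing_bound {t : ℕ} (ht : 2 * t < minDist C) :
    2 ^ Module.finrank (ZMod 2) C * ∑ w ∈ range (t + 1), N.choose w ≤ 2 ^ N := by
  classical
  have hinj : Set.InjOn C.mkQ {c | hammingNorm c ≤ t} := by
    intro x hx y hy hxy
    by_contra hne
    have hmem : x - y ∈ C := (Submodule.Quotient.eq C).1 hxy
    have hdist : hammingNorm (x - y) ≤ 2 * t :=
      calc hammingNorm (x - y) = hammingDist y x := by
            rw [hammingDist_eq_hammingNorm, neg_add_eq_sub]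
        _ ≤ hammingDist y 0 + hammingDist 0 x := hammingDist_triangle y 0 x
        _ = hammingNorm x + hammingNorm y := by
            rw [hammingDist_zero_right, hammingDist_zero_left, add_comm]
        _ ≤ 2 * t := by rw [two_mul]; exact add_le_add hx hy
    exact (ht.trans_le (minDist_le_hammingNorm hmem (sub_ne_zero.2 hne))).not_ge hdist
  have hball : ∑ w ∈ range (t + 1), N.choose w ≤ Nat.card ((Fin N → ZMod 2) ⧸ C) := by
    calc ∑ w ∈ range (t + 1), N.choose w = {c : Fin N → ZMod 2 | hammingNorm c ≤ t}.ncard := by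
          rw [← coe_filter_univ, Set.ncard_coe_finset, card_filter_hammingNorm_le, Fintype.card_fin]
      _ = (C.mkQ '' {c | hammingNorm c ≤ t}).ncard := hinj.ncard_image.symm
      _ ≤ Nat.card ((Fin N → ZMod 2) ⧸ C) := Set.ncard_le_card _
  calc _ = Nat.card C * ∑ w ∈ range (t + 1), N.choose w := by
        rw [Module.natCard_eq_pow_finrank (K := ZMod 2) (V := C), Nat.card_zmod]
    _ ≤ Nat.card C * Nat.card ((Fin N → ZMod 2) ⧸ C) := by gcongr
    _ = Nat.card (Fin N → ZMod 2) := (Submodule.card_eq_card_quotient_mul_card C).symm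
    _ = 2 ^ N := by simp

theorem minDist_le_of_two_pow_lt {t : ℕ}
    (h : 2 ^ N < 2 ^ Module.finrank (ZMod 2) C * ∑ w ∈ range (t + 1), N.choose w) :
    minDist C ≤ 2 * t :=
  not_lt.1 fun ht => (sphere_packing_bound ht).not_gt h

end MinDist

section ExtendedCode

variable {N : ℕ}

theorem extendMap_eq_snoc (c : Fin N → ZMod 2) :
    extendMap N c = Fin.snoc (α := fun _ => ZMod 2) c (∑ i, c i) := rfl

theorem extendMap_injective : Function.Injective (extendMap N) := fun a b h => by
  funext i
  simpa [extendMap_eq_snoc] using congrFun h i.castSucc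

theorem finrank_extendedCode (C : Submodule (ZMod 2) (Fin N → ZMod 2)) :
    Module.finrank (ZMod 2) (extendedCode C) = Module.finrank (ZMod 2) C :=
  (Submodule.equivMapOfInjective _ extendMap_injective C).finrank_eq.symm

theorem even_hammingNorm_extendMap (c : Fin N → ZMod 2) : Even (hammingNorm (extendMap N c)) := by
  rw [← ZMod.natCast_eq_zero_iff_even, natCast_hammingNorm, Fin.sum_univ_castSucc,
    extendMap_eq_snoc]
  simp [CharTwo.add_self_eq_zero]

theorem hammingNorm_le_hammingNorm_extendMap (c : Fin N → ZMod 2) :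
    hammingNorm c ≤ hammingNorm (extendMap N c) := by
  refine card_le_card_of_injOn Fin.castSucc (fun i hi => ?_) (Fin.castSucc_injective N).injOn
  rw [coe_filter_univ] at hi ⊢
  simpa [extendMap_eq_snoc] using hi

end ExtendedCode

section RootsOfUnity

open Polynomial

theorem pow_sub_one_mul_geom_sum_three (q s : ℕ) :
    (q ^ s - 1) * (q ^ (2 * s) + q ^ s + 1) = q ^ (3 * s) - 1 := by
  rw [mul_comm 2, mul_comm 3, pow_mul, pow_mul]
  cases q ^ s with
  | zero => rfl
  | succ m =>
    rw [Nat.add_sub_cancel]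
    refine Nat.eq_sub_of_add_eq ?_
    ring

theorem isPrimitiveRoot_pow_of_orderOf_eq {M : Type*} [CommMonoid M] {q s : ℕ} (hq : 1 < q)
    (hs : s ≠ 0) {α : M} (hα : orderOf α = q ^ (3 * s) - 1) :
    IsPrimitiveRoot (α ^ (q ^ s - 1)) (q ^ (2 * s) + q ^ s + 1) :=
  have hpos : 0 < q ^ (3 * s) - 1 :=
    Nat.sub_pos_of_lt (Nat.one_lt_pow (mul_ne_zero three_ne_zero hs) hq)
  (IsPrimitiveRoot.iff_orderOf.2 hα).pow hpos (pow_sub_one_mul_geom_sum_three q s).symm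

theorem span_range_pow_eq_adjoin {R A : Type*} [CommRing R] [Ring A] [Algebra R A] {x : A}
    (hx : IsIntegral R x) {n : ℕ} (hn : (minpoly R x).natDegree ≤ n) :
    Submodule.span R (Set.range fun i : Fin n => x ^ (i : ℕ)) =
      Subalgebra.toSubmodule (Algebra.adjoin R {x}) := by
  classical
  nontriviality R
  have hmonic : (minpoly R x * X ^ (n - (minpoly R x).natDegree)).Monic :=
    (minpoly.monic hx).mul (monic_X_pow _)
  have hdeg : (minpoly R x * X ^ (n - (minpoly R x).natDegree)).natDegree = n := by
    rw [(minpoly.monic hx).natDegree_mul (monic_X_pow _), natDegree_X_pow, Nat.add_sub_cancel' hn]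
  rw [← Submodule.span_range_natDegree_eq_adjoin hmonic (by simp), hdeg]
  congr 1
  ext y
  simp [Fin.exists_iff]

theorem natDegree_minpoly_eq_orderOf_of_isPrimitiveRoot {K F : Type*} [Field K] [Fintype K]
    [Field F] [Algebra K F] {n : ℕ} {β : F} (hβ : IsPrimitiveRoot β n) (hn : n ≠ 0) :
    (minpoly K β).natDegree = orderOf (Fintype.card K : ZMod n) := by
  have : NeZero n := ⟨hn⟩
  have hint : IsIntegral K β := (hβ.isIntegral (Nat.pos_of_ne_zero hn)).tower_top
  obtain ⟨p, hchar⟩ := CharP.exists K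
  obtain ⟨f, hp, hcard⟩ := FiniteField.card K p
  have : Fact p.Prime := ⟨hp⟩
  have : CharP F p := charP_of_injective_algebraMap (algebraMap K F).injective p
  have hcop : p.Coprime n := by
    rw [hp.coprime_iff_not_dvd, ← CharP.cast_eq_zero_iff F p]
    exact hβ.neZero'.ne
  have hdvd : minpoly K β ∣ cyclotomic n K := by
    refine minpoly.dvd _ _ ?_
    rw [aeval_def, eval₂_eq_eval_map, map_cyclotomic]
    exact hβ.isRoot_cyclotomic (Nat.pos_of_ne_zero hn)
  rw [natDegree_of_dvd_cyclotomic_of_irreducible hcard hcop hdvd (minpoly.irreducible hint),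
    ← orderOf_units, ZMod.coe_unitOfCoprime, hcard]

theorem orderOf_natCast_zmod_geom_sum_three {q s : ℕ} (hq : 1 < q) (hs : s ≠ 0) :
    orderOf (q : ZMod (q ^ (2 * s) + q ^ s + 1)) = 3 * s := by
  have hdvd {d : ℕ} : orderOf (q : ZMod (q ^ (2 * s) + q ^ s + 1)) ∣ d ↔
      q ^ (2 * s) + q ^ s + 1 ∣ q ^ d - 1 := by
    rw [orderOf_dvd_iff_pow_eq_one, ← ZMod.natCast_eq_zero_iff,
      Nat.cast_sub (Nat.one_le_pow _ _ hq.pos), sub_eq_zero, Nat.cast_pow, Nat.cast_one]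
  obtain ⟨k, hk⟩ := hdvd.2 (dvd_of_mul_left_eq _ (pow_sub_one_mul_geom_sum_three q s))
  set d := orderOf (q : ZMod (q ^ (2 * s) + q ^ s + 1))
  have hd0 : d ≠ 0 := left_ne_zero_of_mul (hk ▸ mul_ne_zero three_ne_zero hs)
  have hlt : 2 * s < d := by
    have hle := Nat.le_of_dvd (Nat.sub_pos_of_lt (Nat.one_lt_pow hd0 hq)) (hdvd.1 dvd_rfl)
    exact (Nat.pow_lt_pow_iff_right hq).1 (by omega)
  have hk2 : k < 2 := by
    by_contra! h
    nlinarith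
  obtain rfl | rfl : k = 0 ∨ k = 1 := by omega
  all_goals omega

end RootsOfUnity

section Binomial

theorem sum_range_choose_le_two_pow (n k : ℕ) : ∑ w ∈ range k, n.choose w ≤ 2 ^ n := by
  rw [← Nat.sum_range_choose]
  refine sum_le_sum_of_ne_zero fun w _ hw => ?_
  exact mem_range.2 (Nat.lt_succ_of_le (Nat.choose_ne_zero_iff.1 hw))

theorem two_mul_pow_three_lt_sum_choose (m : ℕ) :
    2 * m ^ 3 < ∑ w ∈ range 3, (m ^ 2 + m + 2).choose w := by
  have hchoose : (m ^ 2 + m + 2) * (m ^ 2 + m + 1) = (m ^ 2 + m + 2).choose 2 * 2 := by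
    simpa using Nat.add_one_mul_choose_eq (m ^ 2 + m + 1) 1
  simp only [sum_range_succ, range_zero, sum_empty, Nat.choose_zero_right, Nat.choose_one_right]
  nlinarith

end Binomial

section BCHCode

variable {F : Type} [Field F] [Algebra (ZMod 2) F] {n : ℕ} {β : F}

theorem BCHCode_singleton_one_eq_ker :
    BCHCode n β {1} =
      LinearMap.ker (Fintype.linearCombination (ZMod 2) fun i : Fin n => β ^ (i : ℕ)) := by
  ext c
  change (∀ j ∈ ({1} : Finset ℕ), ∑ i : Fin n, c i • β ^ (j * (i : ℕ)) = 0) ↔ _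
  simp [Fintype.linearCombination_apply]

theorem finrank_BCHCode_singleton_one (hβ : IsIntegral (ZMod 2) β)
    (hn : (minpoly (ZMod 2) β).natDegree ≤ n) :
    Module.finrank (ZMod 2) (BCHCode n β {1}) = n - (minpoly (ZMod 2) β).natDegree := by
  set syndrome := Fintype.linearCombination (ZMod 2) fun i : Fin n => β ^ (i : ℕ)
  have hrank : Module.finrank (ZMod 2) (LinearMap.range syndrome) =
      (minpoly (ZMod 2) β).natDegree := by
    rw [Fintype.range_linearCombination, span_range_pow_eq_adjoin hβ hn,
      Subalgebra.finrank_toSubmodule, (Algebra.adjoin.powerBasis hβ).finrank,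
      Algebra.adjoin.powerBasis_dim]
  have hnullity := syndrome.finrank_range_add_finrank_ker
  rw [hrank, Module.finrank_fin_fun, ← BCHCode_singleton_one_eq_ker] at hnullity
  omega

theorem three_le_hammingNorm_of_mem_BCHCode (hβ : IsPrimitiveRoot β n) {c : Fin n → ZMod 2}
    (hc : c ∈ BCHCode n β {1}) (hc0 : c ≠ 0) : 3 ≤ hammingNorm c := by
  rw [BCHCode_singleton_one_eq_ker, LinearMap.mem_ker, Fintype.linearCombination_apply] at hc
  refine three_le_hammingNorm_of_sum_smul_eq_zero ?_ (fun i => ?_) hc0 hc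
  · exact fun i j hij => Fin.ext (hβ.pow_inj i.isLt j.isLt hij)
  · exact pow_ne_zero _ (hβ.ne_zero i.pos.ne')

theorem four_le_hammingNorm_of_mem_extendedCode_BCHCode (hβ : IsPrimitiveRoot β n)
    {x : Fin (n + 1) → ZMod 2} (hx : x ∈ extendedCode (BCHCode n β {1})) (hx0 : x ≠ 0) :
    4 ≤ hammingNorm x := by
  obtain ⟨c, hc, rfl⟩ := hx
  have hc0 : c ≠ 0 := by
    rintro rfl
    exact hx0 (map_zero _)
  have h3 := three_le_hammingNorm_of_mem_BCHCode hβ hc hc0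
  have hle := hammingNorm_le_hammingNorm_extendMap c
  obtain ⟨k, hk⟩ := even_hammingNorm_extendMap c
  omega

theorem extendedCode_BCHCode_singleton_one_optimal (hβ : IsPrimitiveRoot β n) {d : ℕ}
    (hd : (minpoly (ZMod 2) β).natDegree = d)
    (hpack : 2 ^ (d + 1) < ∑ w ∈ range 3, (n + 1).choose w) :
    Module.finrank (ZMod 2) (extendedCode (BCHCode n β {1})) = n - d ∧
    minDist (extendedCode (BCHCode n β {1})) = 4 ∧
    ∀ D : Submodule (ZMod 2) (Fin (n + 1) → ZMod 2),
      Module.finrank (ZMod 2) D = n - d → minDist D ≤ 4 := by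
  have hdn : d < n := by
    have hlt : 2 ^ (d + 1) < 2 ^ (n + 1) := hpack.trans_le (sum_range_choose_le_two_pow _ _)
    exact Nat.succ_lt_succ_iff.1 ((Nat.pow_lt_pow_iff_right one_lt_two).1 hlt)
  have hint : IsIntegral (ZMod 2) β := (hβ.isIntegral (Nat.zero_lt_of_lt hdn)).tower_top
  have hdim : Module.finrank (ZMod 2) (extendedCode (BCHCode n β {1})) = n - d := by
    rw [finrank_extendedCode, finrank_BCHCode_singleton_one hint (hd.trans_le hdn.le), hd]
  have hopt (D : Submodule (ZMod 2) (Fin (n + 1) → ZMod 2))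
      (hD : Module.finrank (ZMod 2) D = n - d) : minDist D ≤ 4 := by
    refine minDist_le_of_two_pow_lt (t := 2) ?_
    calc 2 ^ (n + 1) = 2 ^ (n - d) * 2 ^ (d + 1) := by rw [← pow_add]; congr 1; omega
      _ < _ := by rw [hD]; gcongr
  have hne : extendedCode (BCHCode n β {1}) ≠ ⊥ := by
    rw [← Submodule.one_le_finrank_iff, hdim]
    omega
  exact ⟨hdim, (hopt _ hdim).antisymm
    (le_minDist hne fun _ => four_le_hammingNorm_of_mem_extendedCode_BCHCode hβ), hopt⟩

end BCHCode

theorem stmt_12_general (s : ℕ) (hs : s ≠ 0) (n : ℕ) (hn : n = 2 ^ (2 * s) + 2 ^ s + 1)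
    {F : Type} [Field F] [Algebra (ZMod 2) F] (β : F) (hβ : IsPrimitiveRoot β n) :
    Module.finrank (ZMod 2) (extendedCode (BCHCode n β {1})) = n - 3 * s ∧
    minDist (extendedCode (BCHCode n β {1})) = 4 ∧
    ∀ D : Submodule (ZMod 2) (Fin (n + 1) → ZMod 2),
      Module.finrank (ZMod 2) D = n - 3 * s → minDist D ≤ 4 := by
  refine extendedCode_BCHCode_singleton_one_optimal hβ ?_ ?_
  · rw [natDegree_minpoly_eq_orderOf_of_isPrimitiveRoot hβ (hn ▸ Nat.succ_ne_zero _), ZMod.card, hn]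
    exact orderOf_natCast_zmod_geom_sum_three one_lt_two hs
  · calc 2 ^ (3 * s + 1) = 2 * (2 ^ s) ^ 3 := by ring
      _ < ∑ w ∈ range 3, ((2 ^ s) ^ 2 + 2 ^ s + 2).choose w := two_mul_pow_three_lt_sum_choose _
      _ = ∑ w ∈ range 3, (n + 1).choose w := by rw [hn, ← pow_mul, mul_comm s 2]

theorem stmt_12 (s : ℕ) (hs : 2 ≤ s) (n : ℕ) (hn : n = 2 ^ (2 * s) + 2 ^ s + 1)
    (α : GaloisField 2 (3 * s)) (hα : orderOf α = 2 ^ (3 * s) - 1)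
    (β : GaloisField 2 (3 * s)) (hβ : β = α ^ (2 ^ s - 1)) :
    Module.finrank (ZMod 2) (extendedCode (BCHCode n β {1})) = n - 3 * s ∧
    minDist (extendedCode (BCHCode n β {1})) = 4 ∧
    ∀ D : Submodule (ZMod 2) (Fin (n + 1) → ZMod 2),
      Module.finrank (ZMod 2) D = n - 3 * s → minDist D ≤ 4 := by
  subst hn hβ
  have hs0 : s ≠ 0 := by omega
  exact stmt_12_general s hs0 _ rfl _ (isPrimitiveRoot_pow_of_orderOf_eq one_lt_two hs0 hα)
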